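/- Let (A, C, ψ) be a right-right entwining structure over a commutative ring k, g ∈ C a grouplike element, and λ : C → A a convolution-invertible k-linear map with convolution inverse λ⁻¹. The following are equivalent: (1) λ ∈ Q, i.e. ψ(c_1 ⊗ λ(c_2)) = λ(c) ⊗ g in A ⊗_k C for all c ∈ C; (2) Σ λ⁻¹(c_1)·ψ(c_2 ⊗ λ(c_3)) = ε(c) (1_A ⊗ g) for all c ∈ C, where A acts on the first factor of A ⊗_k C; (3) Σ λ⁻¹(c_1) ⊗ c_2 = ψ(g ⊗ λ⁻¹(c)) for all c ∈ C, i.e. λ⁻¹ is right C-colinear. -/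

import Mathlib

/-!
The entwining `ψ` makes `A ⊗ C` into an `A`-bimodule, with `(a ⊗ c) · b = a • ψ (c ⊗ b)`, so that
`Hom(C, A ⊗ C)` becomes a bimodule over the convolution algebra `Hom(C, A)`. With `E c = 1 ⊗ c` and
`G c = ε(c) (1 ⊗ g)`, the three conditions say `E * λ = λ * G`, `λ⁻¹ * (E * λ) = G` and
`λ⁻¹ * E = G * λ⁻¹`. Multiplying by `λ⁻¹` on the left turns the first into the second; multiplying
by `λ⁻¹` on the right turns the second into the third.
-/

open TensorProduct CoalgebraStruct

universe u

section Entwining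

variable (k A C : Type u) [CommRing k] [Ring A] [Algebra k A]
  [AddCommGroup C] [Module k C] [Coalgebra k C]

/-- The map `A ⊗ C → A ⊗ C`, `a ⊗ c ↦ Σ a · b_ψ ⊗ c^ψ` (entwine with `b` and multiply). -/
noncomputable def entwineRight (ψ : C ⊗[k] A →ₗ[k] A ⊗[k] C) (b : A) :
    A ⊗[k] C →ₗ[k] A ⊗[k] C :=
  LinearMap.rTensor C (LinearMap.mul' k A) ∘ₗ
    (TensorProduct.assoc k A A C).symm.toLinearMap ∘ₗ
    LinearMap.lTensor A (ψ ∘ₗ (TensorProduct.mk k C A).flip b)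

/-- The map `(C ⊗ C) ⊗ A → A ⊗ (C ⊗ C)`,
`c ⊗ c' ⊗ a ↦ Σ a_{ψΨ} ⊗ c^Ψ ⊗ c'^ψ`. -/
noncomputable def entwineTwice (ψ : C ⊗[k] A →ₗ[k] A ⊗[k] C) :
    (C ⊗[k] C) ⊗[k] A →ₗ[k] A ⊗[k] (C ⊗[k] C) :=
  (TensorProduct.assoc k A C C).toLinearMap ∘ₗ
    LinearMap.rTensor C ψ ∘ₗ
    (TensorProduct.assoc k C A C).symm.toLinearMap ∘ₗ
    LinearMap.lTensor C ψ ∘ₗ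
    (TensorProduct.assoc k C C A).toLinearMap

/-- `(A, C, ψ)` is a right-right entwining structure. -/
noncomputable def IsEntwining (ψ : C ⊗[k] A →ₗ[k] A ⊗[k] C) : Prop :=
  (∀ (c : C) (a b : A), ψ (c ⊗ₜ[k] (a * b)) = entwineRight k A C ψ b (ψ (c ⊗ₜ[k] a))) ∧
  (∀ c : C, ψ (c ⊗ₜ[k] (1 : A)) = (1 : A) ⊗ₜ[k] c) ∧
  (∀ (c : C) (a : A),
      LinearMap.lTensor A (comul (R := k)) (ψ (c ⊗ₜ[k] a)) =
        entwineTwice k A C ψ ((comul c) ⊗ₜ[k] a)) ∧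
  (∀ (c : C) (a : A),
      TensorProduct.rid k A (LinearMap.lTensor A (counit (R := k)) (ψ (c ⊗ₜ[k] a))) =
        (counit (R := k) c) • a)

/-- `g ∈ C` is a grouplike element. -/
def IsGrouplikeElem (g : C) : Prop := comul g = g ⊗ₜ[k] g ∧ counit (R := k) g = 1

/-- Membership in `Q`: `ψ(c_1 ⊗ q(c_2)) = q(c) ⊗ g` for all `c`. -/
def MemQ (ψ : C ⊗[k] A →ₗ[k] A ⊗[k] C) (g : C) (q : C →ₗ[k] A) : Prop :=
  ∀ c : C, ψ (LinearMap.lTensor C q (comul c)) = q c ⊗ₜ[k] g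

/-- The convolution product on `Hom_k(C, A)`. -/
noncomputable def conv (f h : C →ₗ[k] A) : C →ₗ[k] A :=
  LinearMap.mul' k A ∘ₗ TensorProduct.map f h ∘ₗ comul

/-- The unit of the convolution algebra: `c ↦ ε(c) 1`. -/
noncomputable def convUnit : C →ₗ[k] A :=
  Algebra.linearMap k A ∘ₗ counit

end Entwining

section Stmt8

variable (k A C : Type u) [CommRing k] [Ring A] [Algebra k A]
  [AddCommGroup C] [Module k C] [Coalgebra k C]

/-- The map `c ↦ Σ lamInv(c_1) · ψ(c_2 ⊗ lam(c_3))`, where `A` acts by multiplication on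
the first tensor factor of `A ⊗ C`. -/
noncomputable def cleftLHS (ψ : C ⊗[k] A →ₗ[k] A ⊗[k] C) (lam lamInv : C →ₗ[k] A) :
    C →ₗ[k] A ⊗[k] C :=
  LinearMap.rTensor C (LinearMap.mul' k A) ∘ₗ
    (TensorProduct.assoc k A A C).symm.toLinearMap ∘ₗ
    LinearMap.rTensor (A ⊗[k] C) lamInv ∘ₗ
    LinearMap.lTensor C (ψ ∘ₗ LinearMap.lTensor C lam ∘ₗ comul) ∘ₗ
    comul

section Convolution

variable {R D S M X Y Z U V W : Type*} [CommSemiring R] [AddCommMonoid D] [Module R D]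
  [AddCommMonoid X] [Module R X] [AddCommMonoid Y] [Module R Y] [AddCommMonoid Z] [Module R Z]
  [AddCommMonoid U] [Module R U] [AddCommMonoid V] [Module R V] [AddCommMonoid W] [Module R W]
  [Semiring S] [Algebra R S] [AddCommMonoid M] [Module R M]

theorem rTensor_mul'_assoc_symm_tmul (a : S) (t : S ⊗[R] X) :
    LinearMap.rTensor X (LinearMap.mul' R S) ((TensorProduct.assoc R S S X).symm (a ⊗ₜ t)) =
      a • t := by
  induction t with
  | zero => simp
  | add x y hx hy => simp only [tmul_add, map_add, hx, hy, smul_add]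
  | tmul b x => simp [smul_tmul']

section CoalgebraStruct

variable [CoalgebraStruct R D]

/-- The convolution `c ↦ Σ B (f c₁) (h c₂)` of two linear maps along a bilinear map `B`. For
`B = LinearMap.mul R S` it is the multiplication of `WithConv (D →ₗ[R] S)`. -/
noncomputable def convAlong (B : X →ₗ[R] Y →ₗ[R] Z)
    (f : D →ₗ[R] X) (h : D →ₗ[R] Y) : D →ₗ[R] Z :=
  lift B ∘ₗ map f h ∘ₗ comul

/-- The right action `F * f = (c ↦ Σ ρ (F c₁) (f c₂))` of the convolution algebra of linear maps
`D → S` on linear maps `D → M`, where `ρ` is a right action of `S` on `M`. As `ρ` need not be the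
canonical action of `Sᵐᵒᵖ`, it is passed explicitly. -/
noncomputable def rightConv (ρ : M →ₗ[R] S →ₗ[R] M) (F : D →ₗ[R] M) (f : WithConv (D →ₗ[R] S)) :
    D →ₗ[R] M :=
  convAlong ρ F f.ofConv

variable [Module S M] [IsScalarTower R S M] in
/-- The left action `f * F = (c ↦ Σ f c₁ • F c₂)` of the convolution algebra of linear maps
`D → S` on linear maps from `D` to an `S`-module. -/
noncomputable def leftConv (f : WithConv (D →ₗ[R] S)) (F : D →ₗ[R] M) : D →ₗ[R] M :=
  convAlong (Algebra.lsmul R R M).toLinearMap f.ofConv F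

theorem leftConv_mk_one (f : WithConv (D →ₗ[R] S)) :
    leftConv f (TensorProduct.mk R S D 1) = LinearMap.rTensor D f.ofConv ∘ₗ comul := by
  have lift_map : lift (Algebra.lsmul R R (S ⊗[R] D)).toLinearMap ∘ₗ
      map f.ofConv (TensorProduct.mk R S D 1) = LinearMap.rTensor D f.ofConv :=
    TensorProduct.ext' fun _ _ => by simp [smul_tmul']
  rw [leftConv, convAlong, ← LinearMap.comp_assoc, lift_map]

end CoalgebraStruct

variable [Coalgebra R D]

theorem convAlong_assoc {B₁ : V →ₗ[R] Z →ₗ[R] W} {B₂ : X →ₗ[R] Y →ₗ[R] V}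
    {B₃ : X →ₗ[R] U →ₗ[R] W} {B₄ : Y →ₗ[R] Z →ₗ[R] U}
    (hB : ∀ x y z, B₁ (B₂ x y) z = B₃ x (B₄ y z))
    (f : D →ₗ[R] X) (h : D →ₗ[R] Y) (l : D →ₗ[R] Z) :
    convAlong B₁ (convAlong B₂ f h) l = convAlong B₃ f (convAlong B₄ h l) := by
  have reassoc : lift B₁ ∘ₗ map (lift B₂ ∘ₗ map f h) l =
      (lift B₃ ∘ₗ map f (lift B₄ ∘ₗ map h l)) ∘ₗ (TensorProduct.assoc R D D D).toLinearMap :=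
    ext_threefold fun x y z => by simp [hB]
  calc convAlong B₁ (convAlong B₂ f h) l
    _ = (lift B₁ ∘ₗ map (lift B₂ ∘ₗ map f h) l) ∘ₗ LinearMap.rTensor D comul ∘ₗ comul := by
      rw [← LinearMap.comp_assoc, LinearMap.comp_assoc (LinearMap.rTensor D comul),
        LinearMap.map_comp_rTensor]
      rfl
    _ = (lift B₃ ∘ₗ map f (lift B₄ ∘ₗ map h l)) ∘ₗ LinearMap.lTensor D comul ∘ₗ comul := by
      rw [reassoc, LinearMap.comp_assoc, Coalgebra.coassoc]
    _ = convAlong B₃ f (convAlong B₄ h l) := by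
      rw [← LinearMap.comp_assoc, LinearMap.comp_assoc (LinearMap.lTensor D comul),
        LinearMap.map_comp_lTensor]
      rfl

theorem convAlong_counit_smulRight_left (B : X →ₗ[R] Y →ₗ[R] Z) (x : X) (h : D →ₗ[R] Y) :
    convAlong B ((counit (R := R)).smulRight x) h = B x ∘ₗ h := by
  have factor : map ((counit (R := R) (A := D)).smulRight x) h =
      map (LinearMap.toSpanSingleton R X x) h ∘ₗ LinearMap.rTensor D counit :=
    TensorProduct.ext' fun _ _ => by simp
  rw [convAlong, factor, LinearMap.comp_assoc, Coalgebra.rTensor_counit_comp_comul]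
  ext c
  simp

theorem convAlong_counit_smulRight_right (B : X →ₗ[R] Y →ₗ[R] Z) (f : D →ₗ[R] X) (y : Y) :
    convAlong B f ((counit (R := R)).smulRight y) = B.flip y ∘ₗ f := by
  have factor : map f ((counit (R := R) (A := D)).smulRight y) =
      map f (LinearMap.toSpanSingleton R Y y) ∘ₗ LinearMap.lTensor D counit :=
    TensorProduct.ext' fun _ _ => by simp
  rw [convAlong, factor, LinearMap.comp_assoc, Coalgebra.lTensor_counit_comp_comul]
  ext c
  simp

theorem ofConv_one_eq_counit_smulRight :
    (1 : WithConv (D →ₗ[R] S)).ofConv = (counit (R := R)).smulRight 1 :=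
  LinearMap.ext fun c => Algebra.algebraMap_eq_smul_one (counit c)

theorem rightConv_mul {ρ : M →ₗ[R] S →ₗ[R] M} (hρ_mul : ∀ m a b, ρ (ρ m a) b = ρ m (a * b))
    (F : D →ₗ[R] M) (f h : WithConv (D →ₗ[R] S)) :
    rightConv ρ F (f * h) = rightConv ρ (rightConv ρ F f) h :=
  (convAlong_assoc (B₄ := LinearMap.mul R S) hρ_mul F f.ofConv h.ofConv).symm

theorem rightConv_one {ρ : M →ₗ[R] S →ₗ[R] M} (hρ_one : ∀ m, ρ m 1 = m) (F : D →ₗ[R] M) :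
    rightConv ρ F 1 = F := by
  rw [rightConv, ofConv_one_eq_counit_smulRight, convAlong_counit_smulRight_right]
  ext c
  simp [hρ_one]

theorem rightConv_eq_iff {ρ : M →ₗ[R] S →ₗ[R] M} (hρ_mul : ∀ m a b, ρ (ρ m a) b = ρ m (a * b))
    (hρ_one : ∀ m, ρ m 1 = m) (u : (WithConv (D →ₗ[R] S))ˣ) {F G : D →ₗ[R] M} :
    rightConv ρ F u.val = G ↔ F = rightConv ρ G (u⁻¹).val := by
  constructor
  · rintro rfl
    rw [← rightConv_mul hρ_mul, u.mul_inv, rightConv_one hρ_one]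
  · rintro rfl
    rw [← rightConv_mul hρ_mul, u.inv_mul, rightConv_one hρ_one]

theorem rightConv_counit_smulRight_apply (ρ : M →ₗ[R] S →ₗ[R] M) (m : M)
    (f : WithConv (D →ₗ[R] S)) (c : D) :
    rightConv ρ ((counit (R := R)).smulRight m) f c = ρ m (f.ofConv c) := by
  simp [rightConv, convAlong_counit_smulRight_left]

variable [Module S M] [IsScalarTower R S M]

theorem leftConv_mul (f h : WithConv (D →ₗ[R] S)) (F : D →ₗ[R] M) :
    leftConv (f * h) F = leftConv f (leftConv h F) :=
  convAlong_assoc (B₂ := LinearMap.mul R S) mul_smul f.ofConv h.ofConv F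

theorem leftConv_one (F : D →ₗ[R] M) : leftConv (1 : WithConv (D →ₗ[R] S)) F = F := by
  rw [leftConv, ofConv_one_eq_counit_smulRight, convAlong_counit_smulRight_left]
  ext c
  simp

theorem leftConv_inv_eq_iff (u : (WithConv (D →ₗ[R] S))ˣ) {F G : D →ₗ[R] M} :
    leftConv (u⁻¹).val F = G ↔ F = leftConv u.val G := by
  constructor
  · rintro rfl
    rw [← leftConv_mul, u.mul_inv, leftConv_one]
  · rintro rfl
    rw [← leftConv_mul, u.inv_mul, leftConv_one]

theorem leftConv_counit_smulRight_apply (f : WithConv (D →ₗ[R] S)) (m : M) (c : D) :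
    leftConv f ((counit (R := R)).smulRight m) c = f.ofConv c • m := by
  simp [leftConv, convAlong_counit_smulRight_right]

theorem rightConv_leftConv {ρ : M →ₗ[R] S →ₗ[R] M}
    (hρ_smul : ∀ (a : S) m b, ρ (a • m) b = a • ρ m b)
    (f : WithConv (D →ₗ[R] S)) (F : D →ₗ[R] M) (h : WithConv (D →ₗ[R] S)) :
    rightConv ρ (leftConv f F) h = leftConv f (rightConv ρ F h) :=
  convAlong_assoc hρ_smul f.ofConv F h.ofConv

end Convolution

section EntwineAction

variable {k A C : Type u} [CommRing k] [Ring A] [Algebra k A] [AddCommGroup C] [Module k C]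

/-- The action `(a ⊗ c) · b = Σ a b_ψ ⊗ c^ψ` as a bilinear map; for fixed `b` it is
`entwineRight k A C ψ b`. -/
noncomputable def entwineAction (ψ : C ⊗[k] A →ₗ[k] A ⊗[k] C) :
    A ⊗[k] C →ₗ[k] A →ₗ[k] A ⊗[k] C :=
  (AlgebraTensorModule.lift (LinearMap.toSpanSingleton A _ (curry ψ))).restrictScalars k

theorem entwineAction_tmul (ψ : C ⊗[k] A →ₗ[k] A ⊗[k] C) (a : A) (c : C) (b : A) :
    entwineAction ψ (a ⊗ₜ c) b = a • ψ (c ⊗ₜ b) :=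
  rfl

theorem entwineAction_smul (ψ : C ⊗[k] A →ₗ[k] A ⊗[k] C) (a : A) (m : A ⊗[k] C) (b : A) :
    entwineAction ψ (a • m) b = a • entwineAction ψ m b :=
  LinearMap.congr_fun
    (map_smul (AlgebraTensorModule.lift (LinearMap.toSpanSingleton A _ (curry ψ))) a m) b

theorem entwineRight_eq_entwineAction_flip [Coalgebra k C] (ψ : C ⊗[k] A →ₗ[k] A ⊗[k] C) (b : A) :
    entwineRight k A C ψ b = (entwineAction ψ).flip b :=
  TensorProduct.ext' fun a c => by
    simp [entwineRight, rTensor_mul'_assoc_symm_tmul, entwineAction_tmul]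

theorem entwineAction_mul [Coalgebra k C] {ψ : C ⊗[k] A →ₗ[k] A ⊗[k] C}
    (hψ_mul : ∀ c a b, ψ (c ⊗ₜ[k] (a * b)) = entwineRight k A C ψ b (ψ (c ⊗ₜ[k] a)))
    (m : A ⊗[k] C) (a b : A) :
    entwineAction ψ (entwineAction ψ m a) b = entwineAction ψ m (a * b) := by
  induction m with
  | zero => simp
  | add x y hx hy => simp only [map_add, LinearMap.add_apply, hx, hy]
  | tmul x c =>
    rw [entwineAction_tmul, entwineAction_tmul, entwineAction_smul, hψ_mul,
      entwineRight_eq_entwineAction_flip, LinearMap.flip_apply]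

theorem entwineAction_one {ψ : C ⊗[k] A →ₗ[k] A ⊗[k] C}
    (hψ_one : ∀ c, ψ (c ⊗ₜ[k] 1) = 1 ⊗ₜ[k] c) (m : A ⊗[k] C) : entwineAction ψ m 1 = m := by
  induction m with
  | zero => simp
  | add x y hx hy => simp only [map_add, LinearMap.add_apply, hx, hy]
  | tmul x c => rw [entwineAction_tmul, hψ_one, smul_tmul', smul_eq_mul, mul_one]

variable [Coalgebra k C]

theorem rightConv_entwineAction_mk_one (ψ : C ⊗[k] A →ₗ[k] A ⊗[k] C)
    (f : WithConv (C →ₗ[k] A)) :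
    rightConv (entwineAction ψ) (TensorProduct.mk k A C 1) f =
      ψ ∘ₗ LinearMap.lTensor C f.ofConv ∘ₗ comul := by
  have lift_map : lift (entwineAction ψ) ∘ₗ map (TensorProduct.mk k A C 1) f.ofConv =
      ψ ∘ₗ LinearMap.lTensor C f.ofConv :=
    TensorProduct.ext' fun _ _ => by simp [entwineAction_tmul]
  rw [rightConv, convAlong, ← LinearMap.comp_assoc, lift_map, LinearMap.comp_assoc]

theorem cleftLHS_eq_leftConv_rightConv (ψ : C ⊗[k] A →ₗ[k] A ⊗[k] C)
    (f h : WithConv (C →ₗ[k] A)) :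
    cleftLHS k A C ψ f.ofConv h.ofConv =
      leftConv h (rightConv (entwineAction ψ) (TensorProduct.mk k A C 1) f) := by
  rw [rightConv_entwineAction_mk_one, cleftLHS, leftConv, convAlong]
  simp only [← LinearMap.comp_assoc]
  congr 1
  exact TensorProduct.ext' fun _ _ => by simp [rTensor_mul'_assoc_symm_tmul]

theorem memQ_iff_rightConv_eq_leftConv (ψ : C ⊗[k] A →ₗ[k] A ⊗[k] C) (g : C)
    (f : WithConv (C →ₗ[k] A)) :
    MemQ k A C ψ g f.ofConv ↔ rightConv (entwineAction ψ) (TensorProduct.mk k A C 1) f =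
      leftConv f ((counit (R := k)).smulRight (1 ⊗ₜ g)) := by
  simp [rightConv_entwineAction_mk_one, LinearMap.ext_iff, leftConv_counit_smulRight_apply, MemQ,
    smul_tmul']

theorem rTensor_comul_eq_iff_leftConv_eq_rightConv (ψ : C ⊗[k] A →ₗ[k] A ⊗[k] C) (g : C)
    (f : WithConv (C →ₗ[k] A)) :
    (∀ c, LinearMap.rTensor C f.ofConv (comul c) = ψ (g ⊗ₜ[k] f.ofConv c)) ↔
      leftConv f (TensorProduct.mk k A C 1) =
        rightConv (entwineAction ψ) ((counit (R := k)).smulRight (1 ⊗ₜ g)) f := by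
  simp [leftConv_mk_one, LinearMap.ext_iff, rightConv_counit_smulRight_apply, entwineAction_tmul]

end EntwineAction

theorem memQ_iff_cleft_conditions_general
    (ψ : C ⊗[k] A →ₗ[k] A ⊗[k] C)
    (hψ_mul : ∀ c a b, ψ (c ⊗ₜ[k] (a * b)) = entwineRight k A C ψ b (ψ (c ⊗ₜ[k] a)))
    (hψ_one : ∀ c, ψ (c ⊗ₜ[k] 1) = 1 ⊗ₜ[k] c)
    (g : C) (lam lamInv : C →ₗ[k] A)
    (hinv₁ : conv k A C lam lamInv = convUnit k A C)
    (hinv₂ : conv k A C lamInv lam = convUnit k A C) :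
    (MemQ k A C ψ g lam ↔
      (∀ c : C, cleftLHS k A C ψ lam lamInv c =
        (counit (R := k) c) • ((1 : A) ⊗ₜ[k] g))) ∧
    ((∀ c : C, cleftLHS k A C ψ lam lamInv c =
        (counit (R := k) c) • ((1 : A) ⊗ₜ[k] g)) ↔
      (∀ c : C, LinearMap.rTensor C lamInv (comul c) = ψ (g ⊗ₜ[k] lamInv c))) := by
  let u : (WithConv (C →ₗ[k] A))ˣ :=
    ⟨.toConv lam, .toConv lamInv, congrArg WithConv.toConv hinv₁, congrArg WithConv.toConv hinv₂⟩
  let E : C →ₗ[k] A ⊗[k] C := TensorProduct.mk k A C 1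
  let G : C →ₗ[k] A ⊗[k] C := (counit (R := k)).smulRight (1 ⊗ₜ g)
  let ρ := entwineAction ψ
  have memQ_iff : MemQ k A C ψ g lam ↔ rightConv ρ E u.val = leftConv u.val G :=
    memQ_iff_rightConv_eq_leftConv ψ g u.val
  have cleft_iff : (∀ c, cleftLHS k A C ψ lam lamInv c = counit (R := k) c • ((1 : A) ⊗ₜ[k] g)) ↔
      leftConv (u⁻¹).val (rightConv ρ E u.val) = G := by
    rw [← cleftLHS_eq_leftConv_rightConv, LinearMap.ext_iff]
    rfl
  have colinear_iff : (∀ c, LinearMap.rTensor C lamInv (comul c) = ψ (g ⊗ₜ[k] lamInv c)) ↔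
      leftConv (u⁻¹).val E = rightConv ρ G (u⁻¹).val :=
    rTensor_comul_eq_iff_leftConv_eq_rightConv ψ g (u⁻¹).val
  rw [memQ_iff, cleft_iff, colinear_iff]
  constructor
  · exact (leftConv_inv_eq_iff u).symm
  · rw [← rightConv_leftConv (entwineAction_smul ψ)]
    exact rightConv_eq_iff (entwineAction_mul hψ_mul) (entwineAction_one hψ_one) u

/-- For a convolution-invertible `λ : C → A` in an entwining structure with grouplike `g`,
the following are equivalent: (1) `λ ∈ Q`; (2) `Σ λ⁻¹(c_1)·ψ(c_2 ⊗ λ(c_3)) = ε(c) (1 ⊗ g)`;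
(3) `Σ λ⁻¹(c_1) ⊗ c_2 = ψ(g ⊗ λ⁻¹(c))`, i.e. `λ⁻¹` is right `C`-colinear. -/
theorem memQ_iff_cleft_conditions
    (ψ : C ⊗[k] A →ₗ[k] A ⊗[k] C) (hψ : IsEntwining k A C ψ)
    (g : C) (hg : IsGrouplikeElem k C g)
    (lam lamInv : C →ₗ[k] A)
    (hinv₁ : conv k A C lam lamInv = convUnit k A C)
    (hinv₂ : conv k A C lamInv lam = convUnit k A C) :
    (MemQ k A C ψ g lam ↔
      (∀ c : C, cleftLHS k A C ψ lam lamInv c =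
        (counit (R := k) c) • ((1 : A) ⊗ₜ[k] g))) ∧
    ((∀ c : C, cleftLHS k A C ψ lam lamInv c =
        (counit (R := k) c) • ((1 : A) ⊗ₜ[k] g)) ↔
      (∀ c : C, LinearMap.rTensor C lamInv (comul c) = ψ (g ⊗ₜ[k] lamInv c))) :=
  memQ_iff_cleft_conditions_general k A C ψ hψ.1 hψ.2.1 g lam lamInv hinv₁ hinv₂

end Stmt8
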